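/- Let ψ be an n-qubit stabilizer state whose stabilizer group 𝒮(ψ) contains an element that anticommutes with Z_1. Then T_1ψ is not a stabilizer state. -/

import Mathlib

noncomputable section
namespace PaperFormal

open Matrix

/-- The space of `n`-qubit operators: matrices indexed by computational basis states. -/
abbrev QMat (n : ℕ) := Matrix (Fin n → Fin 2) (Fin n → Fin 2) ℂ

/-- The space of `n`-qubit state vectors. -/
abbrev QVec (n : ℕ) := (Fin n → Fin 2) → ℂ

def σI : Matrix (Fin 2) (Fin 2) ℂ := 1
def σX : Matrix (Fin 2) (Fin 2) ℂ := !![0, 1; 1, 0]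
def σY : Matrix (Fin 2) (Fin 2) ℂ := !![0, -Complex.I; Complex.I, 0]
def σZ : Matrix (Fin 2) (Fin 2) ℂ := !![1, 0; 0, -1]

def IsPauliFactor (m : Matrix (Fin 2) (Fin 2) ℂ) : Prop :=
  m = σI ∨ m = σX ∨ m = σY ∨ m = σZ

/-- Kronecker product over `n` qubits of single-qubit matrices. -/
def kron {n : ℕ} (σ : Fin n → Matrix (Fin 2) (Fin 2) ℂ) : QMat n :=
  fun v w => ∏ j, σ j (v j) (w j)

/-- Membership in the `n`-qubit Pauli group `𝒫_n`:
`M = i^k σ_1 ⊗ ⋯ ⊗ σ_n` with each `σ_j ∈ {I, X, Y, Z}`. -/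
def IsPauli {n : ℕ} (M : QMat n) : Prop :=
  ∃ (k : Fin 4) (σ : Fin n → Matrix (Fin 2) (Fin 2) ℂ),
    (∀ j, IsPauliFactor (σ j)) ∧ M = Complex.I ^ (k : ℕ) • kron σ

/-- A Pauli operator supported on the set `A` of qubits (identity factors outside `A`). -/
def PauliSupportedOn {n : ℕ} (M : QMat n) (A : Set (Fin n)) : Prop :=
  ∃ (k : Fin 4) (σ : Fin n → Matrix (Fin 2) (Fin 2) ℂ),
    (∀ j, IsPauliFactor (σ j)) ∧ (∀ j, j ∉ A → σ j = σI) ∧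
    M = Complex.I ^ (k : ℕ) • kron σ

/-- The Pauli `M` has identity (`j`-th Kronecker factor proportional to identity) at qubit `j`. -/
def PauliTrivialAt {n : ℕ} (M : QMat n) (j : Fin n) : Prop :=
  PauliSupportedOn M {i | i ≠ j}

/-- The single-qubit operator `m` placed at qubit `j` (identity elsewhere). -/
def opAt {n : ℕ} (j : Fin n) (m : Matrix (Fin 2) (Fin 2) ℂ) : QMat n :=
  kron (fun i => if i = j then m else σI)

/-- Inner product `⟨φ, ψ⟩` (antilinear in the first argument). -/
def innerC {n : ℕ} (φ ψ : QVec n) : ℂ := ∑ v, (starRingEnd ℂ) (φ v) * ψ v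

/-- Squared norm `‖ψ‖²`. -/
def nrmSq {n : ℕ} (ψ : QVec n) : ℝ := ∑ v, Complex.normSq (ψ v)

/-- The stabilizer group `𝒮(ψ) = {P ∈ 𝒫_n : Pψ = ψ}`. -/
def stabGroup {n : ℕ} (ψ : QVec n) : Set (QMat n) :=
  {P | IsPauli P ∧ P.mulVec ψ = ψ}

/-- An `n`-qubit pure stabilizer state: a unit vector whose stabilizer group has `2^n` elements. -/
def IsStabState {n : ℕ} (ψ : QVec n) : Prop :=
  nrmSq ψ = 1 ∧ (stabGroup ψ).ncard = 2 ^ n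

/-- The product `∏ i, g i ^ α i` (in the fixed order of indices). -/
def prodPow {n m : ℕ} (g : Fin m → QMat n) (α : Fin m → ZMod 2) : QMat n :=
  (List.ofFn fun i => g i ^ (α i).val).prod

/-- `g` is an independent generating set of `𝒮(ψ)`: the map
`(α_i) ↦ ∏ g_i^{α_i}` is a bijection from `(ℤ/2)^m` onto `𝒮(ψ)`. -/
def IsIndepGenSet {n m : ℕ} (ψ : QVec n) (g : Fin m → QMat n) : Prop :=
  (∀ i, g i ∈ stabGroup ψ) ∧ Function.Injective (prodPow g) ∧
    Set.range (prodPow g) = stabGroup ψ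

/-- The `T` gate `diag(1, e^{iπ/4})`. -/
def Tgate : Matrix (Fin 2) (Fin 2) ℂ :=
  !![1, 0; 0, Complex.exp (Real.pi * Complex.I / 4)]

/-- The diagonal operator multiplying each basis vector by a function of its first qubit. -/
def firstDiag {n : ℕ} [NeZero n] (f : Fin 2 → ℂ) : QMat n :=
  diagonal fun v => f (v 0)

lemma firstDiag_mul {n : ℕ} [NeZero n] (f g : Fin 2 → ℂ) :
    (firstDiag f : QMat n) * firstDiag g = firstDiag (f * g) := by
  simp [firstDiag, diagonal_mul_diagonal]

lemma opAt_zero_diagonal {n : ℕ} [NeZero n] (f : Fin 2 → ℂ) :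
    opAt (0 : Fin n) (diagonal f) = firstDiag f := by
  ext v w
  by_cases hvw : v = w
  · subst hvw
    simp only [opAt, kron, firstDiag, diagonal_apply_eq]
    rw [Finset.prod_eq_single (0 : Fin n)]
    · simp
    · intro j _ hj
      simp [hj, σI]
    · simp
  · obtain ⟨j, hj⟩ := Function.ne_iff.mp hvw
    simp only [opAt, kron, firstDiag, diagonal_apply_ne _ hvw]
    refine Finset.prod_eq_zero (Finset.mem_univ j) ?_
    split_ifs <;> simp [σI, hj]

lemma σZ_eq_diagonal : σZ = diagonal ![1, -1] := by
  ext i j; fin_cases i <;> fin_cases j <;> simp [σZ]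

lemma Tgate_eq_diagonal :
    Tgate = diagonal ![1, Complex.exp (Real.pi * Complex.I / 4)] := by
  ext i j; fin_cases i <;> fin_cases j <;> simp [Tgate]

lemma kron_mul {n : ℕ} (σ τ : Fin n → Matrix (Fin 2) (Fin 2) ℂ) :
    kron σ * kron τ = kron (fun j => σ j * τ j) := by
  ext v w
  simp only [kron, mul_apply, ← Finset.prod_mul_distrib]
  exact (Fintype.prod_sum fun j x => σ j (v j) x * τ j x (w j)).symm

lemma kron_one {n : ℕ} : kron (fun _ : Fin n => 1) = 1 := by
  ext v w
  by_cases hvw : v = w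
  · subst hvw
    simp [kron]
  · obtain ⟨j, hj⟩ := Function.ne_iff.mp hvw
    rw [one_apply_ne hvw]
    exact Finset.prod_eq_zero (Finset.mem_univ j) (one_apply_ne hj)

lemma kron_pow {n : ℕ} (σ : Fin n → Matrix (Fin 2) (Fin 2) ℂ) (m : ℕ) :
    kron σ ^ m = kron (fun j => σ j ^ m) := by
  induction m with
  | zero => simp [kron_one]
  | succ m ih => simp [pow_succ, ih, kron_mul]

lemma IsPauliFactor.mul_pow_four {a b : Matrix (Fin 2) (Fin 2) ℂ}
    (ha : IsPauliFactor a) (hb : IsPauliFactor b) : (a * b) ^ 4 = 1 := by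
  rw [show 4 = 2 * 2 from rfl, pow_mul, pow_two (a * b), pow_two]
  rcases ha with rfl | rfl | rfl | rfl <;> rcases hb with rfl | rfl | rfl | rfl <;>
    simp [σI, σX, σY, σZ, one_fin_two]

lemma IsPauli.mul_pow_four {n : ℕ} {P Q : QMat n} (hP : IsPauli P) (hQ : IsPauli Q) :
    (P * Q) ^ 4 = 1 := by
  obtain ⟨k, σ, hσ, rfl⟩ := hP
  obtain ⟨l, τ, hτ, rfl⟩ := hQ
  have phase (m : ℕ) : (Complex.I ^ m) ^ 4 = 1 := by
    rw [pow_right_comm, Complex.I_pow_four, one_pow]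
  rw [smul_mul_smul_comm, smul_pow, mul_pow, phase, phase, kron_mul, kron_pow,
    funext fun j => (hσ j).mul_pow_four (hτ j), kron_one]
  simp

/-- `P` preserves the value of the first qubit. -/
def PreservesFirst {n : ℕ} [NeZero n] (P : QMat n) : Prop :=
  ∀ v w, P v w ≠ 0 → v 0 = w 0

/-- `P` flips the value of the first qubit. -/
def FlipsFirst {n : ℕ} [NeZero n] (P : QMat n) : Prop :=
  ∀ v w, P v w ≠ 0 → w 0 = v 0 + 1

lemma IsPauli.preservesFirst_or_flipsFirst {n : ℕ} [NeZero n] {P : QMat n}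
    (hP : IsPauli P) : PreservesFirst P ∨ FlipsFirst P := by
  obtain ⟨k, σ, hσ, rfl⟩ := hP
  have factor_ne_zero {v w : Fin n → Fin 2}
      (h : (Complex.I ^ (k : ℕ) • kron σ) v w ≠ 0) : σ 0 (v 0) (w 0) ≠ 0 :=
    Finset.prod_ne_zero_iff.mp (right_ne_zero_of_mul h) 0 (Finset.mem_univ 0)
  rcases hσ 0 with h | h | h | h
  on_goal 1 => left
  on_goal 2 => right
  on_goal 3 => right
  on_goal 4 => left
  all_goals
    intro v w hvw
    have h0 := factor_ne_zero hvw
    rw [h] at h0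
    generalize v 0 = a at *
    generalize w 0 = b at *
    fin_cases a <;> fin_cases b <;> simp_all [σI, σX, σY, σZ]

lemma flipsFirst_of_anticommute {n : ℕ} [NeZero n] {P : QMat n}
    (h : P * opAt (0 : Fin n) σZ = -(opAt (0 : Fin n) σZ * P)) : FlipsFirst P := by
  intro v w hvw
  rw [σZ_eq_diagonal, opAt_zero_diagonal, firstDiag] at h
  have hentry := congrFun (congrFun h v) w
  rw [mul_diagonal, neg_apply, diagonal_mul] at hentry
  generalize v 0 = a at *
  generalize w 0 = b at *
  fin_cases a <;> fin_cases b <;> simp_all [self_eq_neg, neg_eq_self]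

lemma PreservesFirst.mul_firstDiag {n : ℕ} [NeZero n] {P : QMat n}
    (hP : PreservesFirst P) (f : Fin 2 → ℂ) : P * firstDiag f = firstDiag f * P := by
  ext v w
  rw [firstDiag, mul_diagonal, diagonal_mul]
  by_cases h : P v w = 0
  · simp [h]
  · rw [hP v w h, mul_comm]

lemma FlipsFirst.mul_firstDiag {n : ℕ} [NeZero n] {P : QMat n}
    (hP : FlipsFirst P) (f : Fin 2 → ℂ) :
    P * firstDiag f = firstDiag (fun x => f (x + 1)) * P := by
  ext v w
  rw [firstDiag, firstDiag, mul_diagonal, diagonal_mul]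
  by_cases h : P v w = 0
  · simp [h]
  · rw [hP v w h, mul_comm]

lemma firstDiag_mulVec_injective {n : ℕ} [NeZero n] {f : Fin 2 → ℂ} (hf : ∀ x, f x ≠ 0) :
    Function.Injective (firstDiag f : QMat n).mulVec := by
  intro φ χ h
  ext v
  have hv := congrFun h v
  simp only [firstDiag, mulVec_diagonal] at hv
  exact mul_left_cancel₀ (hf _) hv

lemma exp_pi_mul_I_div_four_pow_four : Complex.exp (Real.pi * Complex.I / 4) ^ 4 = -1 := by
  rw [← Complex.exp_nat_mul, ← Complex.exp_pi_mul_I]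
  congr 1
  push_cast
  ring

/-- Two Paulis flipping the first qubit cannot stabilize `ψ` and `T_1 ψ` respectively. -/
lemma eq_zero_of_flipsFirst {n : ℕ} [NeZero n] {ψ : QVec n} {P Q : QMat n}
    (hPpauli : IsPauli P) (hQpauli : IsPauli Q) (hP : FlipsFirst P) (hQ : FlipsFirst Q)
    (hQψ : Q *ᵥ ψ = ψ)
    (hPψ : P *ᵥ (opAt (0 : Fin n) Tgate *ᵥ ψ) = opAt (0 : Fin n) Tgate *ᵥ ψ) : ψ = 0 := by
  rw [Tgate_eq_diagonal, opAt_zero_diagonal] at hPψ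
  have hω4 := exp_pi_mul_I_div_four_pow_four
  have hω : Complex.exp (Real.pi * Complex.I / 4) ≠ 0 := Complex.exp_ne_zero _
  set ω := Complex.exp (Real.pi * Complex.I / 4)
  have hPdiag : P *ᵥ ψ = firstDiag ![ω⁻¹, ω] *ᵥ ψ := by
    have hinj : Function.Injective (firstDiag ![ω, 1] : QMat n).mulVec :=
      firstDiag_mulVec_injective (by intro x; fin_cases x <;> simp [hω])
    apply hinj
    have hflip : (fun x : Fin 2 => ![1, ω] (x + 1)) = ![ω, 1] := by
      ext x; fin_cases x <;> simp
    have hmul : (![ω, 1] * ![ω⁻¹, ω] : Fin 2 → ℂ) = ![1, ω] := by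
      ext x; fin_cases x <;> simp [hω]
    rw [mulVec_mulVec, hP.mul_firstDiag, hflip, ← mulVec_mulVec] at hPψ
    rw [hPψ, mulVec_mulVec, firstDiag_mul, hmul]
  have hQP : (Q * P) *ᵥ ψ = firstDiag ![ω, ω⁻¹] *ᵥ ψ := by
    have hflip : (fun x : Fin 2 => ![ω⁻¹, ω] (x + 1)) = ![ω, ω⁻¹] := by
      ext x; fin_cases x <;> simp
    rw [← mulVec_mulVec, hPdiag, mulVec_mulVec, hQ.mul_firstDiag, hflip, ← mulVec_mulVec, hQψ]
  have hcomm (f : Fin 2 → ℂ) : Q * P * firstDiag f = firstDiag f * (Q * P) := by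
    rw [mul_assoc, hP.mul_firstDiag, ← mul_assoc, hQ.mul_firstDiag, mul_assoc]
    congr 3
    ext x; fin_cases x <;> simp
  have hpow (m : ℕ) : (Q * P) ^ m *ᵥ ψ = firstDiag (![ω, ω⁻¹] ^ m) *ᵥ ψ := by
    induction m with
    | zero => simp [firstDiag]
    | succ m ih =>
      rw [pow_succ', ← mulVec_mulVec, ih, mulVec_mulVec, hcomm, ← mulVec_mulVec, hQP,
        mulVec_mulVec, firstDiag_mul, pow_succ]
  have hfour : (![ω, ω⁻¹] ^ 4 : Fin 2 → ℂ) = fun _ => -1 := by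
    ext x; fin_cases x <;> simp [hω4]
  have hneg := hpow 4
  rw [hQpauli.mul_pow_four hPpauli, one_mulVec, hfour] at hneg
  ext v
  have hv := congrFun hneg v
  simp only [firstDiag, mulVec_diagonal, neg_one_mul] at hv
  exact self_eq_neg.mp hv

/-- **A `T` gate on a qubit where the stabilizer group acts nontrivially produces
magic** (App. B 1): if the stabilizer group of the stabilizer state `ψ` contains
an element anticommuting with `Z_1`, then `T_1 ψ` is not a stabilizer state. -/
theorem T_gate_creates_magic {n : ℕ} [NeZero n]
    (ψ : QVec n) (hψ : IsStabState ψ)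
    (hex : ∃ P ∈ stabGroup ψ,
      P * opAt (0 : Fin n) σZ = -(opAt (0 : Fin n) σZ * P)) :
    ¬ IsStabState ((opAt (0 : Fin n) Tgate).mulVec ψ) := by
  rintro ⟨-, hcard⟩
  obtain ⟨Q, hQ, hanti⟩ := hex
  have hQflip := flipsFirst_of_anticommute hanti
  have hψ0 : ψ ≠ 0 := by
    rintro rfl
    simpa [nrmSq] using hψ.1
  have hnoflip : ∀ P ∈ stabGroup (opAt (0 : Fin n) Tgate *ᵥ ψ), ¬ FlipsFirst P :=
    fun P hP hflip => hψ0 (eq_zero_of_flipsFirst hP.1 hQ.1 hflip hQflip hQ.2 hP.2)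
  have hsub : stabGroup (opAt (0 : Fin n) Tgate *ᵥ ψ) ⊆ stabGroup ψ := by
    intro P hP
    have hpres := hP.1.preservesFirst_or_flipsFirst.resolve_right (hnoflip P hP)
    refine ⟨hP.1, ?_⟩
    have hinj : Function.Injective (opAt (0 : Fin n) Tgate).mulVec := by
      rw [Tgate_eq_diagonal, opAt_zero_diagonal]
      exact firstDiag_mulVec_injective (by intro x; fin_cases x <;> simp)
    apply hinj
    have hfix := hP.2
    rwa [mulVec_mulVec, Tgate_eq_diagonal, opAt_zero_diagonal, hpres.mul_firstDiag,
      ← opAt_zero_diagonal, ← Tgate_eq_diagonal, ← mulVec_mulVec] at hfix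
  have hssub : stabGroup (opAt (0 : Fin n) Tgate *ᵥ ψ) ⊂ stabGroup ψ :=
    (Set.ssubset_iff_of_subset hsub).mpr ⟨Q, hQ, fun h => hnoflip Q h hQflip⟩
  have hfin : (stabGroup ψ).Finite :=
    Set.finite_of_ncard_ne_zero (by rw [hψ.2]; positivity)
  have hlt := Set.ncard_lt_ncard hssub hfin
  rw [hcard, hψ.2] at hlt
  exact hlt.false

end PaperFormal
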